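/- Let (λ,(θ,θ')) and (ξ,(η,η')) be as in the orbit classification with (λ,(θ,θ')) = (ξ,(η,η')). Then the intersection of the H(F)-orbit O^{(λ,(θ,θ'))} and the U(F)-orbit S^{(ξ,(η,η'))} in Gr_M × Gr_N consists of exactly one point, namely (t^{-ξ}, D t^{(η,η')}). -/

import Mathlib

/- Common setup: `F = ℂ((t))` the field of formal Laurent series, `O = ℂ[[t]]` its ring of
integers (elements with no negative coefficients), `tpow k = t^k`.  `InGLO A` says that the
square matrix `A` lies in `GL(O)`, i.e. both `A` and an inverse of `A` have entries in `O`. -/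

noncomputable section

abbrev F : Type := LaurentSeries ℂ

/-- `t^k` for `k : ℤ`, where `t` is the uniformizer of `ℂ((t))`. -/
noncomputable def tpow (k : ℤ) : F := (HahnSeries.single (1 : ℤ) (1 : ℂ) : F) ^ k

/-- The ring of integers `O = ℂ[[t]] ⊆ ℂ((t))`. -/
def Oint : Set F := {f : F | ∀ m : ℤ, m < 0 → f.coeff m = 0}

/-- `A ∈ GL_n(O)`. -/
def InGLO {n : ℕ} (A : Matrix (Fin n) (Fin n) F) : Prop :=
  ∃ B : Matrix (Fin n) (Fin n) F,
    (∀ i j, A i j ∈ Oint) ∧ (∀ i j, B i j ∈ Oint) ∧ A * B = 1 ∧ B * A = 1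

/-- Block-diagonal embedding of an `M×M` matrix into the top-left corner of an `n×n`
matrix, with `1`'s on the rest of the diagonal. -/
noncomputable def embTop (M n : ℕ) (g : Matrix (Fin M) (Fin M) F) :
    Matrix (Fin n) (Fin n) F := fun i j =>
  if hi : (i : ℕ) < M then
    (if hj : (j : ℕ) < M then g ⟨i, hi⟩ ⟨j, hj⟩ else 0)
  else (if (i : ℕ) = (j : ℕ) then 1 else 0)

/-- `u ∈ U⁻_{M,N}(F)`, the unipotent radical of the negative parabolic of type
`(M+1,1,…,1)` in `GL_N`: identity diagonal, and (0-based) the only nonzero off-diagonal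
entries are in rows `i ≥ M+1` and columns `j < i`. -/
def InUminus (M : ℕ) {n : ℕ} (u : Matrix (Fin n) (Fin n) F) : Prop :=
  (∀ i, u i i = 1) ∧
  ∀ i j : Fin n, i ≠ j → ((i : ℕ) ≤ M ∨ (i : ℕ) ≤ (j : ℕ)) → u i j = 0

/-- The representative `L_{(λ,(θ,θ'))} ∈ GL_N(F)`, `N = M+1+K`: the upper-left
`(M+1)×(M+1)` block has diagonal `t^{λ_i+θ_i}` (`i ≤ M`) and last row
`(t^{θ_1},…,t^{θ_{M+1}})`, and the lower-right block is `diag(t^{θ'_1},…,t^{θ'_K})`. -/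
noncomputable def LmatN (M K : ℕ) (lam : Fin M → ℤ) (th : Fin (M + 1) → ℤ)
    (th' : Fin K → ℤ) : Matrix (Fin (M + 1 + K)) (Fin (M + 1 + K)) F := fun i j =>
  if hi : (i : ℕ) < M then
    (if (i : ℕ) = (j : ℕ) then tpow (lam ⟨i, hi⟩ + th ⟨i, by omega⟩) else 0)
  else if hi2 : (i : ℕ) = M then
    (if hj : (j : ℕ) < M + 1 then tpow (th ⟨j, hj⟩) else 0)
  else if (i : ℕ) = (j : ℕ) then
    tpow (th' ⟨(i : ℕ) - (M + 1), by have := i.isLt; omega⟩)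
  else 0

/-- Lower-triangular unipotent matrices. -/
def LowUnip {n : ℕ} (v : Matrix (Fin n) (Fin n) F) : Prop :=
  (∀ i, v i i = 1) ∧ ∀ i j : Fin n, (i : ℕ) < (j : ℕ) → v i j = 0

/-- Upper-triangular unipotent matrices. -/
def UpUnip {n : ℕ} (v : Matrix (Fin n) (Fin n) F) : Prop :=
  (∀ i, v i i = 1) ∧ ∀ i j : Fin n, (j : ℕ) < (i : ℕ) → v i j = 0

/-- The diagonal matrix `diag(t^{f 0}, …, t^{f (n-1)})`. -/
noncomputable def tdiag {n : ℕ} (f : Fin n → ℤ) : Matrix (Fin n) (Fin n) F :=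
  Matrix.diagonal fun i => tpow (f i)

/-- The matrix `D ∈ GL_N`: the identity matrix except that row `M+1` (1-based) is
`(1,1,…,1,0,…,0)` with `M+1` ones. -/
noncomputable def Dmat (M K : ℕ) : Matrix (Fin (M + 1 + K)) (Fin (M + 1 + K)) F :=
  fun i j =>
    if (i : ℕ) = M then (if (j : ℕ) ≤ M then 1 else 0)
    else if i = j then 1 else 0

/-- Concatenation of `η : ℤ^{M+1}` and `η' : ℤ^{K}` into a sequence of length `N=M+1+K`. -/
def fullSeq (M K : ℕ) (eta : Fin (M + 1) → ℤ) (eta' : Fin K → ℤ) :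
    Fin (M + 1 + K) → ℤ := fun i =>
  if h : (i : ℕ) < M + 1 then eta ⟨i, h⟩
  else eta' ⟨(i : ℕ) - (M + 1), by have := i.isLt; omega⟩

/-- The exponent sequence of `t^{-ξ} = diag(t^{-ξ_1},…,t^{-ξ_M},1,…,1)`. -/
def xiExt (M K : ℕ) (xi : Fin M → ℤ) : Fin (M + 1 + K) → ℤ := fun i =>
  if h : (i : ℕ) < M then -(xi ⟨i, h⟩) else 0

/-- The simple roots `α_1, …, α_{M+N-1}` (`N = M+1+K`, so `M+N-1 = 2M+K`) of `GL(M|N)`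
with respect to the mixed Borel, as elements of the weight lattice `ℤ^M × ℤ^N` with basis
`δ_1,…,δ_M` (first factor) and `ε_1,…,ε_N` (second factor):
`α_{2k-1} = -ε_k + δ_k`, `α_{2k} = -δ_k + ε_{k+1}` (`1 ≤ k ≤ M`), and
`α_{2M+j} = -ε_{M+j} + ε_{M+j+1}` (`1 ≤ j ≤ N-M-1`). -/
noncomputable def sroot (M K : ℕ) (i : Fin (2 * M + K)) :
    (Fin M → ℤ) × (Fin (M + 1 + K) → ℤ) :=
  if h : (i : ℕ) < 2 * M then
    if (i : ℕ) % 2 = 0 then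
      (Pi.single ⟨(i : ℕ) / 2, by omega⟩ 1, Pi.single ⟨(i : ℕ) / 2, by omega⟩ (-1))
    else
      (Pi.single ⟨(i : ℕ) / 2, by omega⟩ (-1), Pi.single ⟨(i : ℕ) / 2 + 1, by omega⟩ 1)
  else
    (0, Pi.single ⟨(i : ℕ) - 2 * M + M, by have := i.isLt; omega⟩ (-1)
        + Pi.single ⟨(i : ℕ) - 2 * M + M + 1, by have := i.isLt; omega⟩ 1)

/-! A point of the intersection has the form `(t^{-λ} l b, D t^{(θ,θ')} r q)` with `b`, `q` over
`O`, where `l` and `r` are the torus conjugates of the unipotent matrices that define the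
`U(F)`-orbit, so it is enough to show that `l` and `r` have entries in `O`. Compare with the
description of the same point in the `H(F)`-orbit and eliminate `g` from the first `M` rows:
with `μ_i = λ_i + θ_i` and `r_top` the first `M` rows of `r`, this gives
`l⁻¹ t^μ r_top = A t^μ C` with `A`, `C` over `O`. Since `l⁻¹` is lower and `r_top` upper
unitriangular, each entry in row `k` of `r_top` is, up to the factor `t^{μ_1 + ⋯ + μ_k}`, a
minor of the left-hand side in the first `k` rows. As `μ` is increasing, that power of `t`
divides all such minors of the right-hand side, so `r_top` is over `O`; transposing, so is
`l⁻¹`, and hence `l`.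

The columns of `D` and of `g` beyond the first `M` are those of the identity, and there `u` is
supported on a lower unitriangular block. For the lower right block `r₂₂` of `r` this gives
`s = r₂₂ k₂₂` with `s` lower unitriangular and `k₂₂` over `O`. Then `det k₂₂ = 1`, so
`s⁻¹ r₂₂ = k₂₂⁻¹` is over `O` and the same argument with `μ = 0` shows that `r₂₂` is over `O`. -/

section Combinatorics

open Finset

theorem prod_le_prod_of_card_eq {ι M : Type*} [CommMonoid M] [LinearOrder M] [IsOrderedMonoid M]
    {φ : ι → M} {s t : Finset ι} {c : M} (hst : #s = #t) (ht : ∀ x ∈ t, c ≤ φ x)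
    (hs : ∀ x ∉ t, φ x ≤ c) : ∏ x ∈ s, φ x ≤ ∏ x ∈ t, φ x := by
  classical
  calc ∏ x ∈ s, φ x = (∏ x ∈ s ∩ t, φ x) * ∏ x ∈ s \ t, φ x :=
        (prod_inter_mul_prod_sdiff s t φ).symm
    _ ≤ (∏ x ∈ s ∩ t, φ x) * c ^ #(s \ t) := by
        gcongr
        exact prod_le_pow_card _ _ _ fun x hx => hs x (mem_sdiff.1 hx).2
    _ = (∏ x ∈ t ∩ s, φ x) * c ^ #(t \ s) := by
        rw [inter_comm, card_sdiff_comm hst]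
    _ ≤ (∏ x ∈ t ∩ s, φ x) * ∏ x ∈ t \ s, φ x := by
        gcongr
        exact pow_card_le_prod _ _ _ fun x hx => ht x (mem_sdiff.1 hx).1
    _ = ∏ x ∈ t, φ x := prod_inter_mul_prod_sdiff t s φ

theorem prod_comp_le_prod_Iic_of_antitone {m M : Type*} [LinearOrder m] [Fintype m] [CommMonoid M]
    [LinearOrder M] [IsOrderedMonoid M] {φ : m → M} (hφ : Antitone φ) {k : m}
    {p : {a // a ≤ k} → m} (hp : Function.Injective p) :
    ∏ a, φ (p a) ≤ ∏ a : {a // a ≤ k}, φ a := by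
  have hk : ∀ x, x ∈ univ.map (Function.Embedding.subtype (· ≤ k)) ↔ x ≤ k := by simp
  have := prod_le_prod_of_card_eq (φ := φ) (c := φ k) (s := univ.map ⟨p, hp⟩)
    (t := univ.map (Function.Embedding.subtype (· ≤ k))) (by simp)
    (fun x hx => hφ ((hk x).1 hx)) (fun x hx => hφ (not_le.1 (mt (hk x).2 hx)).le)
  rwa [prod_map, prod_map] at this

end Combinatorics

section Submatrix

open Matrix

variable {R : Type*} [Semiring R] {m n o q : Type*} [Fintype n]

theorem submatrix_mul_of_forall_notMem_range [Fintype m] {e : m → n} (he : Function.Injective e)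
    {A : Matrix n n R} (hA : ∀ i, ∀ j ∉ Set.range e, A (e i) j = 0) (Z : Matrix n o R)
    (f : q → o) : (A * Z).submatrix e f = A.submatrix e e * Z.submatrix e f := by
  ext i j
  simp only [submatrix_apply, mul_apply]
  exact (Fintype.sum_of_injective e he _ _ (fun b hb => by rw [hA i b hb, zero_mul])
    fun b => rfl).symm

theorem mul_submatrix_of_forall_notMem_range [Fintype m] {e : m → n} (he : Function.Injective e)
    {Z : Matrix n n R} (hZ : ∀ i ∉ Set.range e, ∀ j, Z i (e j) = 0) (A : Matrix o n R)
    (f : q → o) : (A * Z).submatrix f e = A.submatrix f e * Z.submatrix e e := by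
  ext i j
  simp only [submatrix_apply, mul_apply]
  exact (Fintype.sum_of_injective e he _ _ (fun b hb => by rw [hZ b hb j, mul_zero])
    fun b => rfl).symm

variable [DecidableEq n]

theorem submatrix_diagonal_mul [Fintype m] [DecidableEq m] (d : n → R) (Z : Matrix n o R)
    (e : m → n) (f : q → o) :
    (diagonal d * Z).submatrix e f = diagonal (d ∘ e) * Z.submatrix e f := by
  ext i j
  simp only [submatrix_apply, diagonal_mul, Function.comp_apply]

theorem submatrix_mul_diagonal [Fintype m] [DecidableEq m] (Z : Matrix o n R) (d : n → R)
    (f : q → o) (e : m → n) :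
    (Z * diagonal d).submatrix f e = Z.submatrix f e * diagonal (d ∘ e) := by
  ext i j
  simp only [submatrix_apply, mul_diagonal, Function.comp_apply]

theorem submatrix_mul_of_submatrix_eq_one {e : m → n} {A : Matrix n n R}
    (hA : A.submatrix e id = (1 : Matrix n n R).submatrix e id) (Z : Matrix n o R) (f : q → o) :
    (A * Z).submatrix e f = Z.submatrix e f := by
  rw [submatrix_mul _ _ _ id _ Function.bijective_id, hA,
    ← submatrix_mul _ _ _ id _ Function.bijective_id, Matrix.one_mul]

theorem submatrix_mul_eq_self_of_submatrix_eq_one [Finite m] {e : m → n}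
    (he : Function.Injective e) {A Z : Matrix n n R}
    (hA : A.submatrix id e = (1 : Matrix n n R).submatrix id e)
    (hZ : ∀ i ∉ Set.range e, ∀ j, Z i (e j) = 0) :
    (A * Z).submatrix id e = Z.submatrix id e := by
  have := Fintype.ofFinite m
  rw [mul_submatrix_of_forall_notMem_range he hZ, hA,
    ← mul_submatrix_of_forall_notMem_range he hZ, one_mul]

theorem submatrix_mul_diagonal_eq_of_mul_eq [Finite m] {e : m → n}
    (he : Function.Injective e) {R : Type*} [CommRing R] {P D u Z : Matrix n n R} {t : n → R}
    (hP : P.submatrix id e = (1 : Matrix n n R).submatrix id e)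
    (hD : D.submatrix id e = (1 : Matrix n n R).submatrix id e) (hD_det : IsUnit D.det)
    (hu : ∀ i ∉ Set.range e, ∀ j, u i (e j) = 0) (h : P * u * (D * diagonal t) = D * Z) :
    (u * diagonal t).submatrix id e = Z.submatrix id e := by
  have ht : ∀ i ∉ Set.range e, ∀ j, diagonal t i (e j) = 0 := fun i hi j =>
    diagonal_apply_ne _ fun hij => hi ⟨j, hij.symm⟩
  have hut : ∀ i ∉ Set.range e, ∀ j, (u * diagonal t) i (e j) = 0 := fun i hi j => by
    rw [mul_diagonal, hu i hi j, zero_mul]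
  have hD_mul : D * (u * diagonal t).submatrix id e = D * Z.submatrix id e :=
    calc D * (u * diagonal t).submatrix id e
        = (D * (u * diagonal t)).submatrix id e :=
          (submatrix_mul _ _ id id e Function.bijective_id).symm
      _ = (P * (u * diagonal t)).submatrix id e := by
          rw [submatrix_mul_eq_self_of_submatrix_eq_one he hD hut,
            submatrix_mul_eq_self_of_submatrix_eq_one he hP hut]
      _ = (P * u * (D * diagonal t)).submatrix id e := by
          rw [← mul_assoc, submatrix_mul _ _ id id e Function.bijective_id,
            submatrix_mul _ _ id id e Function.bijective_id,
            submatrix_mul_eq_self_of_submatrix_eq_one he hD ht]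
      _ = D * Z.submatrix id e := by
          rw [h, submatrix_mul _ _ id id e Function.bijective_id, submatrix_id_id]
  rw [← nonsing_inv_mul_cancel_left D (submatrix _ id e) hD_det, hD_mul,
    nonsing_inv_mul_cancel_left D _ hD_det]

end Submatrix

section Integrality

open Matrix

variable {R : Type*} [CommRing R] {m n : Type*} [Fintype m] [Fintype n] [DecidableEq n]

theorem det_mul_eq_sum_det_submatrix (A : Matrix n m R) (B : Matrix m n R) :
    (A * B).det = ∑ p : n → m, (∏ i, A i (p i)) * (B.submatrix p id).det := by
  have hrows : A * B = fun i => ∑ p, A i p • B p := by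
    ext i j
    simp only [mul_apply, Finset.sum_apply, Pi.smul_apply, smul_eq_mul]
  rw [hrows]
  refine (MultilinearMap.map_sum detRowAlternating.toMultilinearMap
    fun i p => A i p • B p).trans (Finset.sum_congr rfl fun p _ => ?_)
  exact MultilinearMap.map_smul_univ detRowAlternating.toMultilinearMap
    (fun i => A i (p i)) (fun i => B (p i))

theorem exists_mapMatrix_subtype_eq {S : Subring R} {A : Matrix n n R} (hA : A ∈ S.matrix) :
    ∃ A' : Matrix n n S, S.subtype.mapMatrix A' = A :=
  ⟨of fun i j => ⟨A i j, hA i j⟩, rfl⟩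

theorem det_mem_of_mem_matrix {S : Subring R} {A : Matrix n n R} (hA : A ∈ S.matrix) :
    A.det ∈ S := by
  obtain ⟨A', rfl⟩ := exists_mapMatrix_subtype_eq hA
  exact S.subtype.map_det A' ▸ A'.det.2

theorem inv_mem_matrix_of_det_eq_one {S : Subring R} {A : Matrix n n R} (hA : A ∈ S.matrix)
    (hdet : A.det = 1) : A⁻¹ ∈ S.matrix := by
  obtain ⟨A', rfl⟩ := exists_mapMatrix_subtype_eq hA
  rw [inv_def, hdet, Ring.inverse_one, one_smul, ← S.subtype.map_adjugate]
  exact fun i j => (A'.adjugate i j).2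

end Integrality

section Unitriangular

open Matrix

/-- Upper triangular matrices with `1`s on the diagonal. A lower unitriangular matrix is one whose
transpose is upper unitriangular. -/
structure IsUpperUnitriangular {R m : Type*} [Zero R] [One R] [LT m] (A : Matrix m m R) :
    Prop where
  isUpperTriangular : A.IsUpperTriangular
  apply_self : ∀ i, A i i = 1

theorem IsUpperUnitriangular.submatrix {R m p : Type*} [Zero R] [One R] [Preorder m] [Preorder p]
    {A : Matrix m m R} (hA : IsUpperUnitriangular A) {f : p → m} (hf : StrictMono f) :
    IsUpperUnitriangular (A.submatrix f f) where
  isUpperTriangular _ _ hij := hA.isUpperTriangular (hf hij)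
  apply_self i := hA.apply_self (f i)

variable {R : Type*} [CommRing R] {m : Type*} [LinearOrder m] [Fintype m]

namespace IsUpperUnitriangular

variable {A : Matrix m m R}

theorem det_eq_one (hA : IsUpperUnitriangular A) : A.det = 1 := by
  rw [det_of_isUpperTriangular hA.isUpperTriangular]
  exact Finset.prod_eq_one fun i _ => hA.apply_self i

theorem isUnit_det (hA : IsUpperUnitriangular A) : IsUnit A.det :=
  hA.det_eq_one ▸ isUnit_one

theorem inv (hA : IsUpperUnitriangular A) : IsUpperUnitriangular A⁻¹ := by
  have := A.invertibleOfIsUnitDet hA.isUnit_det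
  have hupper : A⁻¹.IsUpperTriangular :=
    blockTriangular_inv_of_blockTriangular hA.isUpperTriangular
  refine ⟨hupper, fun i => ?_⟩
  calc A⁻¹ i i = A⁻¹ i i * A i i := by rw [hA.apply_self, mul_one]
    _ = (A⁻¹ * A) i i := by
        rw [mul_apply, Finset.sum_eq_single_of_mem i (Finset.mem_univ i)]
        rintro j - hj
        rcases hj.lt_or_gt with hji | hij
        · rw [hupper hji, zero_mul]
        · rw [hA.isUpperTriangular hij, mul_zero]
    _ = 1 := by rw [inv_mul_of_invertible, one_apply_eq]

theorem inv_transpose (hA : IsUpperUnitriangular Aᵀ) : IsUpperUnitriangular A⁻¹ᵀ :=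
  transpose_nonsing_inv A ▸ hA.inv

theorem det_eq_one_of_transpose (hA : IsUpperUnitriangular Aᵀ) : A.det = 1 :=
  A.det_transpose ▸ hA.det_eq_one

end IsUpperUnitriangular

theorem det_submatrix_Iic_ite {n : Type*} {r : Matrix m n R} {e : m → n}
    (hr : IsUpperUnitriangular (r.submatrix id e)) {k : m} {j : n} :
    (r.submatrix Subtype.val fun a : {a // a ≤ k} => if a = k then j else e a).det =
      r k j := by
  rw [det_of_isUpperTriangular, Fintype.prod_eq_single ⟨k, le_rfl⟩]
  · rw [submatrix_apply, if_pos rfl]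
  · intro a ha
    rw [submatrix_apply, if_neg (mt Subtype.ext ha)]
    exact hr.apply_self a
  · intro a b hba
    have hbk : (b : m) < k := lt_of_lt_of_le hba a.2
    rw [submatrix_apply, if_neg hbk.ne]
    exact hr.isUpperTriangular hba

end Unitriangular

section Conjugation

open Matrix

variable {K : Type*} [DivisionRing K] {m : Type*} [Fintype m]

/-- The torus conjugate `d⁻¹ A d` of `A` by the diagonal matrix with entries `d`, used for vectors
`d` without zero entries. -/
def diagonalConj [DecidableEq m] (d : m → K) (A : Matrix m m K) : Matrix m m K :=
  diagonal d⁻¹ * A * diagonal d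

theorem diagonalConj_apply [DecidableEq m] (d : m → K) (A : Matrix m m K) (i j : m) :
    diagonalConj d A i j = (d i)⁻¹ * A i j * d j := by
  rw [diagonalConj, mul_diagonal, diagonal_mul, Pi.inv_apply]

theorem diagonal_inv_mul_diagonal [DecidableEq m] {d : m → K} (hd : ∀ i, d i ≠ 0) :
    diagonal d⁻¹ * diagonal d = 1 := by
  simp [diagonal_mul_diagonal, hd]

theorem diagonal_mul_diagonalConj [DecidableEq m] {d : m → K} (hd : ∀ i, d i ≠ 0)
    (A : Matrix m m K) : diagonal d * diagonalConj d A = A * diagonal d := by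
  ext i j
  rw [diagonal_mul, diagonalConj_apply, mul_diagonal, mul_assoc, mul_inv_cancel_left₀ (hd i)]

theorem IsUpperUnitriangular.diagonalConj [LinearOrder m] {d : m → K} (hd : ∀ i, d i ≠ 0)
    {A : Matrix m m K} (hA : IsUpperUnitriangular A) :
    IsUpperUnitriangular (diagonalConj d A) where
  isUpperTriangular i j hij := by
    rw [diagonalConj_apply, hA.isUpperTriangular hij, mul_zero, zero_mul]
  apply_self i := by rw [diagonalConj_apply, hA.apply_self, mul_one, inv_mul_cancel₀ (hd i)]

theorem IsUpperUnitriangular.diagonalConj_transpose [LinearOrder m] {d : m → K}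
    (hd : ∀ i, d i ≠ 0) {A : Matrix m m K} (hA : IsUpperUnitriangular Aᵀ) :
    IsUpperUnitriangular (_root_.diagonalConj d A)ᵀ where
  isUpperTriangular i j hij := by
    rw [transpose_apply, diagonalConj_apply, ← A.transpose_apply, hA.isUpperTriangular hij,
      mul_zero, zero_mul]
  apply_self i := by
    rw [transpose_apply, diagonalConj_apply, ← A.transpose_apply, hA.apply_self, mul_one,
      inv_mul_cancel₀ (hd i)]

end Conjugation

section Valuation

open Matrix

variable {K Γ₀ : Type*} [Field K] [LinearOrderedCommGroupWithZero Γ₀] {v : Valuation K Γ₀}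
  {m n : Type*} [LinearOrder m] [Fintype m]

theorem valuation_det_mul_diagonal_mul_le {d : m → K} (hd : Antitone fun i => v (d i)) {k : m}
    {A : Matrix {a // a ≤ k} m K} {B : Matrix m {a // a ≤ k} K} (hA : ∀ i j, A i j ∈ v.integer)
    (hB : ∀ i j, B i j ∈ v.integer) :
    v (A * diagonal d * B).det ≤ ∏ a : {a // a ≤ k}, v (d a) := by
  rw [det_mul_eq_sum_det_submatrix]
  refine v.map_sum_le fun p _ => ?_
  by_cases hp : Function.Injective p
  · have hdet : v (B.submatrix p id).det ≤ 1 :=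
      det_mem_of_mem_matrix (S := v.integer) fun i j => hB (p i) j
    calc v ((∏ i, (A * diagonal d) i (p i)) * (B.submatrix p id).det)
        = (∏ i, v (A i (p i)) * v (d (p i))) * v (B.submatrix p id).det := by
          simp only [mul_diagonal, map_mul, map_prod]
      _ ≤ (∏ i, 1 * v (d (p i))) * 1 :=
          mul_le_mul' (Finset.prod_le_prod' fun i _ => mul_le_mul' (hA i (p i)) le_rfl) hdet
      _ = ∏ i, v (d (p i)) := by simp only [one_mul, mul_one]
      _ ≤ ∏ a : {a // a ≤ k}, v (d a) := prod_comp_le_prod_Iic_of_antitone hd hp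
  · obtain ⟨a, b, hab, hne⟩ := Function.not_injective_iff.1 hp
    rw [det_zero_of_row_eq hne (by ext; simp [hab]), mul_zero, map_zero]
    exact zero_le

/- The minor of both sides of `h` in the rows up to `k`, with column `j` put in place of the last
column `e k`, equals `r k j` times the product of the `d a` with `a ≤ k`. -/
theorem mem_integer_of_mul_diagonal_mul_eq {d : m → K} (hd₀ : ∀ i, d i ≠ 0)
    (hd : Antitone fun i => v (d i)) {l A : Matrix m m K} {r B : Matrix m n K} {e : m → n}
    (hl : IsUpperUnitriangular lᵀ) (hr : IsUpperUnitriangular (r.submatrix id e))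
    (hA : ∀ i j, A i j ∈ v.integer) (hB : ∀ i j, B i j ∈ v.integer)
    (h : l * diagonal d * r = A * diagonal d * B) (k : m) (j : n) : r k j ∈ v.integer := by
  let I : {a // a ≤ k} → m := Subtype.val
  let J : {a // a ≤ k} → n := fun a => if a = k then j else e a
  have hl_det : (l.submatrix I I).det = 1 :=
    (hl.submatrix (Subtype.strictMono_coe (· ≤ k))).det_eq_one_of_transpose
  have hminor : (∏ a, d (I a)) * r k j = (A.submatrix I id * diagonal d * B.submatrix id J).det :=
    calc (∏ a, d (I a)) * r k j
        = (l.submatrix I I * (diagonal (d ∘ I) * r.submatrix I J)).det := by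
          rw [det_mul, det_mul, det_diagonal, det_submatrix_Iic_ite hr,
            hl_det, one_mul]
          rfl
      _ = ((l * (diagonal d * r)).submatrix I J).det := by
          rw [submatrix_mul_of_forall_notMem_range Subtype.val_injective fun a b hb => ?_,
            submatrix_diagonal_mul]
          exact hl.isUpperTriangular (a.2.trans_lt (by simpa [I] using hb))
      _ = (A.submatrix I id * diagonal d * B.submatrix id J).det := by
          rw [← Matrix.mul_assoc, h, submatrix_mul _ _ _ id _ Function.bijective_id,
            submatrix_mul _ _ _ id _ Function.bijective_id, submatrix_id_id]
  have hprod : 0 < ∏ a, v (d (I a)) :=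
    zero_lt_iff.2 (Finset.prod_ne_zero_iff.2 fun a _ => v.ne_zero_iff.2 (hd₀ _))
  refine le_of_mul_le_mul_left ?_ hprod
  calc (∏ a, v (d (I a))) * v (r k j)
      = v (A.submatrix I id * diagonal d * B.submatrix id J).det := by
        rw [← hminor, map_mul, map_prod]
    _ ≤ (∏ a, v (d (I a))) * 1 := by
        rw [mul_one]
        exact valuation_det_mul_diagonal_mul_le hd (fun _ _ => hA _ _) fun _ _ => hB _ _

theorem mem_integer_matrix_of_mul_diagonal_mul_eq {d : m → K} (hd₀ : ∀ i, d i ≠ 0)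
    (hd : Antitone fun i => v (d i)) {l A r B : Matrix m m K} (hl : IsUpperUnitriangular lᵀ)
    (hr : IsUpperUnitriangular r) (hA : A ∈ v.integer.matrix) (hB : B ∈ v.integer.matrix)
    (h : l * diagonal d * r = A * diagonal d * B) : l ∈ v.integer.matrix := by
  have ht : rᵀ * diagonal d * lᵀ = Bᵀ * diagonal d * Aᵀ := by
    simpa only [transpose_mul, diagonal_transpose, mul_assoc] using congrArg transpose h
  exact fun i j => mem_integer_of_mul_diagonal_mul_eq (e := id) hd₀ hd (r := lᵀ) hr hl
    (fun i j => hB j i) (fun i j => hA j i) ht j i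

theorem mem_integer_matrix_of_eq_mul {s r k : Matrix m m K} (hs : IsUpperUnitriangular sᵀ)
    (hr : IsUpperUnitriangular r) (hk : k ∈ v.integer.matrix) (h : s = r * k) :
    r ∈ v.integer.matrix := by
  have hdet : k.det = 1 := by
    simpa only [det_mul, hr.det_eq_one, one_mul, hs.det_eq_one_of_transpose, eq_comm] using
      congrArg det h
  have hk_inv : k⁻¹ = s⁻¹ * r := by
    rw [h, Matrix.mul_inv_rev, mul_assoc, nonsing_inv_mul _ hr.isUnit_det, mul_one]
  refine mem_integer_of_mul_diagonal_mul_eq (d := 1) (e := id) (A := k⁻¹) (B := 1) (l := s⁻¹)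
    (fun _ => one_ne_zero) (fun _ _ _ => le_rfl) hs.inv_transpose hr
    (inv_mem_matrix_of_det_eq_one hk hdet) (one_mem v.integer.matrix) ?_
  rw [show diagonal (1 : m → K) = 1 from diagonal_one, mul_one, mul_one, mul_one, hk_inv]

theorem submatrix_mem_integer_matrix_of_mul_eq [LinearOrder n] [Fintype n] {d : n → K}
    (hd : ∀ i, d i ≠ 0) {e : m → n} (he : StrictMono e) {u r k : Matrix n n K}
    (hu : IsUpperUnitriangular uᵀ) (hr : IsUpperUnitriangular r)
    (hr_zero : ∀ i, ∀ j ∉ Set.range e, r (e i) j = 0) (hk : k ∈ v.integer.matrix)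
    (h : (u * diagonal d).submatrix id e = (diagonal d * (r * k)).submatrix id e) :
    r.submatrix e e ∈ v.integer.matrix := by
  have hd' : ∀ i, (d ∘ e) i ≠ 0 := fun i => hd (e i)
  have hblock : u.submatrix e e * diagonal (d ∘ e) =
      diagonal (d ∘ e) * (r.submatrix e e * k.submatrix e e) :=
    calc u.submatrix e e * diagonal (d ∘ e) = (u * diagonal d).submatrix e e :=
          (submatrix_mul_diagonal _ _ _ _).symm
      _ = (diagonal d * (r * k)).submatrix e e := congrArg (submatrix · e id) h
      _ = diagonal (d ∘ e) * (r.submatrix e e * k.submatrix e e) := by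
          rw [submatrix_diagonal_mul, submatrix_mul_of_forall_notMem_range he.injective hr_zero]
  refine mem_integer_matrix_of_eq_mul (s := diagonalConj (d ∘ e) (u.submatrix e e))
    (.diagonalConj_transpose hd' (hu.submatrix he)) (hr.submatrix he)
    (k := k.submatrix e e) (fun i j => hk (e i) (e j)) ?_
  rw [diagonalConj, mul_assoc, hblock, ← mul_assoc, diagonal_inv_mul_diagonal hd', one_mul]

theorem mem_integer_of_torus_conj_eq {d μ : m → K} (hd₀ : ∀ i, d i ≠ 0) (hμ₀ : ∀ i, μ i ≠ 0)
    (hμ : Antitone fun i => v (μ i)) {g l A : Matrix m m K} {r C : Matrix m n K} {e : m → n}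
    (hl : IsUpperUnitriangular lᵀ) (hr : IsUpperUnitriangular (r.submatrix id e))
    (hA : A ∈ v.integer.matrix) (hC : ∀ i j, C i j ∈ v.integer)
    (hgl : g * diagonal d = diagonal d * l * A)
    (hgr : g * diagonal (d * μ) * C = diagonal (d * μ) * r) :
    l ∈ v.integer.matrix ∧ ∀ i j, r i j ∈ v.integer := by
  have hdμ : diagonal (d * μ) = diagonal d * diagonal μ := (diagonal_mul_diagonal _ _).symm
  have hcancel : l * (A * diagonal μ * C) = diagonal μ * r := by
    have := congrArg (diagonal d⁻¹ * ·) hgr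
    simpa only [hdμ, ← Matrix.mul_assoc, hgl, diagonal_inv_mul_diagonal hd₀, Matrix.one_mul]
      using this
  have h : l⁻¹ * diagonal μ * r = A * diagonal μ * C := by
    have hl_det : IsUnit l.det := hl.det_eq_one_of_transpose ▸ isUnit_one
    rw [Matrix.mul_assoc, ← hcancel, nonsing_inv_mul_cancel_left _ _ hl_det]
  have h_square : l⁻¹ * diagonal μ * r.submatrix id e = A * diagonal μ * C.submatrix id e := by
    simpa only [submatrix_mul _ _ _ id _ Function.bijective_id, submatrix_id_id] using
      congrArg (submatrix · id e) h
  have hl_inv : l⁻¹ ∈ v.integer.matrix := mem_integer_matrix_of_mul_diagonal_mul_eq hμ₀ hμ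
    hl.inv_transpose hr hA (fun i j => hC i (e j)) h_square
  refine ⟨?_, mem_integer_of_mul_diagonal_mul_eq hμ₀ hμ hl.inv_transpose hr hA hC h⟩
  rw [← nonsing_inv_nonsing_inv l (hl.det_eq_one_of_transpose ▸ isUnit_one)]
  exact inv_mem_matrix_of_det_eq_one hl_inv hl.inv_transpose.det_eq_one_of_transpose

end Valuation

section LaurentSeries

open WithZero

/-- The subring `O = ℂ[[t]]` of `F = ℂ((t))`, as the integers of the `t`-adic valuation; its
underlying set is `Oint`. -/
abbrev laurentIntegers : Subring F :=
  (Valued.v : Valuation F ℤᵐ⁰).integer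

theorem mem_Oint_iff {f : F} : f ∈ Oint ↔ f ∈ laurentIntegers :=
  (LaurentSeries.valuation_le_iff_coeff_lt_eq_zero ℂ (D := 0)).symm

theorem tpow_ne_zero (k : ℤ) : tpow k ≠ 0 :=
  zpow_ne_zero k (by simp)

theorem tpow_add (j k : ℤ) : tpow (j + k) = tpow j * tpow k :=
  zpow_add₀ (by simp) j k

theorem valuation_tpow (k : ℤ) : Valued.v (tpow k) = exp (-k) := by
  rw [tpow, map_zpow₀, LaurentSeries.valuation_single_zpow, ← exp_zsmul, smul_neg, smul_eq_mul,
    mul_one]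

theorem antitone_valuation_tpow {ι : Type*} [Preorder ι] {f : ι → ℤ} (hf : Monotone f) :
    Antitone fun i => Valued.v (tpow (f i)) := fun i j hij => by
  simpa only [valuation_tpow, exp_le_exp, neg_le_neg_iff] using hf hij

end LaurentSeries

section Unipotent

open Matrix

variable {n : ℕ} {A : Matrix (Fin n) (Fin n) F}

theorem lowUnip_iff : LowUnip A ↔ IsUpperUnitriangular Aᵀ :=
  ⟨fun h => ⟨fun _ _ hij => h.2 _ _ hij, h.1⟩, fun h => ⟨h.2, fun _ _ hij => h.1 hij⟩⟩

theorem upUnip_iff : UpUnip A ↔ IsUpperUnitriangular A :=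
  ⟨fun h => ⟨fun _ _ hij => h.2 _ _ hij, h.1⟩, fun h => ⟨h.2, fun _ _ hij => h.1 hij⟩⟩

end Unipotent

section GLO

open Matrix

variable {n : ℕ} {A B : Matrix (Fin n) (Fin n) F}

theorem InGLO.exists_inv (hA : InGLO A) :
    ∃ A' ∈ laurentIntegers.matrix, A * A' = 1 := by
  obtain ⟨A', -, hA', h, -⟩ := hA
  exact ⟨A', fun i j => mem_Oint_iff.1 (hA' i j), h⟩

theorem InGLO.mem_matrix (hA : InGLO A) : A ∈ laurentIntegers.matrix :=
  fun i j => mem_Oint_iff.1 (hA.choose_spec.1 i j)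

theorem inGLO_of_mul_eq_one (hA : A ∈ laurentIntegers.matrix) (hB : B ∈ laurentIntegers.matrix)
    (h : A * B = 1) : InGLO A :=
  ⟨B, fun i j => mem_Oint_iff.2 (hA i j), fun i j => mem_Oint_iff.2 (hB i j), h,
    mul_eq_one_comm.1 h⟩

theorem inGLO_of_det_eq_one (hA : A ∈ laurentIntegers.matrix) (hdet : A.det = 1) : InGLO A :=
  inGLO_of_mul_eq_one hA (inv_mem_matrix_of_det_eq_one hA hdet)
    (mul_nonsing_inv A (hdet ▸ isUnit_one))

theorem InGLO.mul (hA : InGLO A) (hB : InGLO B) : InGLO (A * B) := by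
  obtain ⟨A', hA', hAA'⟩ := hA.exists_inv
  obtain ⟨B', hB', hBB'⟩ := hB.exists_inv
  refine inGLO_of_mul_eq_one (mul_mem hA.mem_matrix hB.mem_matrix) (mul_mem hB' hA') ?_
  rw [mul_assoc, ← mul_assoc B, hBB', one_mul, hAA']

theorem exists_eq_mul_of_mul_eq (hA : A ∈ laurentIntegers.matrix) (hB : InGLO B)
    {X Y : Matrix (Fin n) (Fin n) F} (h : X * A = Y * B) :
    ∃ C ∈ laurentIntegers.matrix, Y = X * C := by
  obtain ⟨B', hB', hBB'⟩ := hB.exists_inv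
  exact ⟨A * B', mul_mem hA hB', by rw [← mul_assoc, h, mul_assoc, hBB', mul_one]⟩

end GLO

section Blocks

open Matrix

variable {M K : ℕ}

/-- The first `M` of the `N = M + 1 + K` indices, those of the subgroup `GL_M` of `GL_N`. -/
def topIndex (M K : ℕ) (i : Fin M) : Fin (M + 1 + K) :=
  Fin.castAdd K i.castSucc

theorem topIndex_val (i : Fin M) : (topIndex M K i : ℕ) = i :=
  rfl

theorem topIndex_strictMono : StrictMono (topIndex M K) :=
  fun _ _ h => h

theorem mem_range_topIndex_iff {j : Fin (M + 1 + K)} :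
    j ∈ Set.range (topIndex M K) ↔ (j : ℕ) < M :=
  ⟨by rintro ⟨i, rfl⟩; exact i.2, fun h => ⟨⟨j, h⟩, rfl⟩⟩

theorem fullSeq_topIndex (th : Fin (M + 1) → ℤ) (thp : Fin K → ℤ) (i : Fin M) :
    fullSeq M K th thp (topIndex M K i) = th i.castSucc :=
  dif_pos i.castSucc.2

/-- The last `K + 1` of the `N = M + 1 + K` indices, complementary to `topIndex`. -/
abbrev BottomIndex (M K : ℕ) : Type :=
  {i : Fin (M + 1 + K) // M ≤ (i : ℕ)}

theorem notMem_range_bottomIndex_iff {j : Fin (M + 1 + K)} :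
    j ∉ Set.range (Subtype.val : BottomIndex M K → _) ↔ (j : ℕ) < M := by
  simp

theorem embTop_mul_submatrix_topIndex (g : Matrix (Fin M) (Fin M) F) {o q : Type*}
    (Z : Matrix (Fin (M + 1 + K)) o F) (f : q → o) :
    (embTop M (M + 1 + K) g * Z).submatrix (topIndex M K) f = g * Z.submatrix (topIndex M K) f := by
  rw [submatrix_mul_of_forall_notMem_range topIndex_strictMono.injective]
  · congr 1
    ext i j : 2
    simp [embTop, topIndex_val]
  · intro i j hj
    simp [embTop, topIndex_val, mt mem_range_topIndex_iff.2 hj]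

theorem embTop_submatrix_bottomIndex (g : Matrix (Fin M) (Fin M) F) :
    (embTop M (M + 1 + K) g).submatrix id (Subtype.val : BottomIndex M K → _) =
      submatrix 1 id Subtype.val := by
  ext i j : 2
  have := j.2
  simp only [submatrix_apply, id, embTop, one_apply, Fin.ext_iff]
  split_ifs <;> first | rfl | omega

theorem Dmat_submatrix_topIndex :
    (Dmat M K).submatrix (topIndex M K) id = submatrix 1 (topIndex M K) id := by
  ext i j : 2
  simp [Dmat, topIndex_val, i.2.ne, one_apply]

theorem Dmat_submatrix_bottomIndex :
    (Dmat M K).submatrix id (Subtype.val : BottomIndex M K → _) =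
      submatrix 1 id Subtype.val := by
  ext i j : 2
  have := j.2
  simp only [submatrix_apply, id, Dmat, one_apply, Fin.ext_iff]
  split_ifs <;> first | rfl | omega

theorem isUnit_det_Dmat : IsUnit (Dmat M K).det := by
  have hD : IsUpperUnitriangular (Dmat M K)ᵀ := by
    refine ⟨fun i j hij => ?_, fun i => by simp +contextual [Dmat]⟩
    have hne : j ≠ i := hij.ne
    have : ¬ ((j : ℕ) = M ∧ (i : ℕ) ≤ M) := fun h => by
      have : (j : ℕ) < i := hij
      omega
    simp only [transpose_apply, Dmat, if_neg hne]
    split_ifs <;> first | rfl | omega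
  exact hD.det_eq_one_of_transpose ▸ isUnit_one

variable {u : Matrix (Fin (M + 1 + K)) (Fin (M + 1 + K)) F}

theorem InUminus.submatrix_topIndex (hu : InUminus M u) :
    u.submatrix (topIndex M K) id = submatrix 1 (topIndex M K) id := by
  ext i j : 2
  rcases eq_or_ne (topIndex M K i) j with h | h
  · simp [← h, hu.1, one_apply]
  · simpa [h] using hu.2 _ _ h (Or.inl i.2.le)

theorem InUminus.apply_eq_zero (hu : InUminus M u) :
    ∀ i ∉ Set.range (Subtype.val : BottomIndex M K → _), ∀ j : BottomIndex M K, u i j = 0 := by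
  intro i hi j
  have hij : (i : ℕ) < j := (notMem_range_bottomIndex_iff.1 hi).trans_le j.2
  exact hu.2 i j (Fin.ne_of_lt hij) (Or.inr hij.le)

theorem InUminus.isUpperUnitriangular_transpose (hu : InUminus M u) : IsUpperUnitriangular uᵀ :=
  ⟨fun _ _ hij => hu.2 _ _ hij.ne (Or.inr hij.le), hu.1⟩

theorem mem_laurentIntegers_of_orbits_eq_top {lam : Fin M → ℤ} {th : Fin (M + 1) → ℤ}
    {thp : Fin K → ℤ} (hmono : Monotone fun i : Fin M => lam i + th i.castSucc)
    {g l A : Matrix (Fin M) (Fin M) F} {r C : Matrix (Fin (M + 1 + K)) (Fin (M + 1 + K)) F}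
    (hu : InUminus M u) (hl : IsUpperUnitriangular lᵀ) (hr : IsUpperUnitriangular r)
    (hA : A ∈ laurentIntegers.matrix) (hC : C ∈ laurentIntegers.matrix)
    (hgl : g * tdiag (fun i => -lam i) = tdiag (fun i => -lam i) * l * A)
    (hgr : embTop M (M + 1 + K) g * u * (Dmat M K * tdiag (fullSeq M K th thp)) * C =
      Dmat M K * (tdiag (fullSeq M K th thp) * r)) :
    l ∈ laurentIntegers.matrix ∧ ∀ i j, r (topIndex M K i) j ∈ laurentIntegers := by
  have htop : (fun i => tpow (fullSeq M K th thp i)) ∘ topIndex M K =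
      (fun i => tpow (-lam i)) * fun i => tpow (lam i + th i.castSucc) := by
    ext1 i
    simp [fullSeq_topIndex, ← tpow_add]
  refine mem_integer_of_torus_conj_eq (fun _ => tpow_ne_zero _) (fun _ => tpow_ne_zero _)
    (antitone_valuation_tpow hmono) (r := r.submatrix (topIndex M K) id)
    (C := C.submatrix (topIndex M K) id) hl (hr.submatrix topIndex_strictMono) hA
    (fun i j => hC (topIndex M K i) j) hgl ?_
  have := congrArg (submatrix · (topIndex M K) id) hgr
  simp only [mul_assoc, embTop_mul_submatrix_topIndex,
    submatrix_mul_of_submatrix_eq_one hu.submatrix_topIndex,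
    submatrix_mul_of_submatrix_eq_one Dmat_submatrix_topIndex, tdiag,
    submatrix_diagonal_mul, htop] at this
  rw [Matrix.mul_assoc, this]

theorem mem_laurentIntegers_of_orbits_eq_bottom {f : Fin (M + 1 + K) → ℤ}
    {g : Matrix (Fin M) (Fin M) F} {r k : Matrix (Fin (M + 1 + K)) (Fin (M + 1 + K)) F}
    (hu : InUminus M u) (hr : IsUpperUnitriangular r) (hk : k ∈ laurentIntegers.matrix)
    (h : embTop M (M + 1 + K) g * u * (Dmat M K * tdiag f) = Dmat M K * (tdiag f * (r * k))) :
    r.submatrix (Subtype.val : BottomIndex M K → _) Subtype.val ∈ laurentIntegers.matrix := by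
  have hcols := submatrix_mul_diagonal_eq_of_mul_eq Subtype.val_injective
    (embTop_submatrix_bottomIndex g) Dmat_submatrix_bottomIndex isUnit_det_Dmat
    hu.apply_eq_zero h
  exact submatrix_mem_integer_matrix_of_mul_eq (fun _ => tpow_ne_zero _)
    (Subtype.strictMono_coe _) hu.isUpperUnitriangular_transpose hr
    (fun i j hj => hr.isUpperTriangular ((notMem_range_bottomIndex_iff.1 hj).trans_le i.2)) hk hcols

end Blocks

section Orbits

open Matrix

theorem exists_mul_tdiag_eq_of_lowUnip {n : ℕ} (f : Fin n → ℤ) {A : Matrix (Fin n) (Fin n) F}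
    (hA : LowUnip A) : ∃ l, IsUpperUnitriangular lᵀ ∧ A * tdiag f = tdiag f * l :=
  have hf : ∀ i, tpow (f i) ≠ 0 := fun _ => tpow_ne_zero _
  ⟨_, .diagonalConj_transpose hf (lowUnip_iff.1 hA), (diagonal_mul_diagonalConj hf A).symm⟩

theorem exists_mul_tdiag_eq_of_upUnip {n : ℕ} (f : Fin n → ℤ) {A : Matrix (Fin n) (Fin n) F}
    (hA : UpUnip A) : ∃ r, IsUpperUnitriangular r ∧ A * tdiag f = tdiag f * r :=
  have hf : ∀ i, tpow (f i) ≠ 0 := fun _ => tpow_ne_zero _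
  ⟨_, .diagonalConj hf (upUnip_iff.1 hA), (diagonal_mul_diagonalConj hf A).symm⟩

theorem mem_matrix_laurentIntegers_of_orbits_eq {M K : ℕ} {lam : Fin M → ℤ}
    {th : Fin (M + 1) → ℤ} {thp : Fin K → ℤ}
    (hmono : Monotone fun i : Fin M => lam i + th i.castSucc)
    {g l a b : Matrix (Fin M) (Fin M) F} {u r p q : Matrix (Fin (M + 1 + K)) (Fin (M + 1 + K)) F}
    (hu : InUminus M u) (hl : IsUpperUnitriangular lᵀ) (hr : IsUpperUnitriangular r)
    (ha : InGLO a) (hb : InGLO b) (hp : InGLO p) (hq : InGLO q)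
    (hX : tdiag (fun i => -lam i) * l * b = g * tdiag (fun i => -lam i) * a)
    (hY : Dmat M K * (tdiag (fullSeq M K th thp) * r) * q =
      embTop M (M + 1 + K) g * u * (Dmat M K * tdiag (fullSeq M K th thp)) * p) :
    l ∈ laurentIntegers.matrix ∧ r ∈ laurentIntegers.matrix := by
  obtain ⟨A, hA, hgA⟩ := exists_eq_mul_of_mul_eq hb.mem_matrix ha hX
  obtain ⟨k, hk, hgk⟩ := exists_eq_mul_of_mul_eq hq.mem_matrix hp hY
  obtain ⟨C, hC, hgC⟩ := exists_eq_mul_of_mul_eq hp.mem_matrix hq hY.symm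
  obtain ⟨hl_int, hr_top⟩ :=
    mem_laurentIntegers_of_orbits_eq_top hmono hu hl hr hA hC hgA hgC.symm
  have hr_bottom := mem_laurentIntegers_of_orbits_eq_bottom hu hr hk
    (hgk.trans (by rw [mul_assoc, mul_assoc]))
  refine ⟨hl_int, fun i j => ?_⟩
  by_cases hi : (i : ℕ) < M
  · obtain ⟨i, rfl⟩ := mem_range_topIndex_iff.2 hi
    exact hr_top i j
  by_cases hj : (j : ℕ) < M
  · rw [hr.isUpperTriangular (hj.trans_le (not_lt.1 hi))]
    exact zero_mem _
  · exact hr_bottom ⟨i, not_lt.1 hi⟩ ⟨j, not_lt.1 hj⟩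

end Orbits

theorem stmt5_general (M K : ℕ) (lam : Fin M → ℤ) (th : Fin (M + 1) → ℤ) (thp : Fin K → ℤ)
    (hmono : Monotone fun i : Fin M => lam i + th i.castSucc)
    (X : Matrix (Fin M) (Fin M) F) (Y : Matrix (Fin (M + 1 + K)) (Fin (M + 1 + K)) F)
    (hO : ∃ (g : Matrix (Fin M) (Fin M) F)
        (u : Matrix (Fin (M + 1 + K)) (Fin (M + 1 + K)) F)
        (c1 : Matrix (Fin M) (Fin M) F)
        (c2 : Matrix (Fin (M + 1 + K)) (Fin (M + 1 + K)) F),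
        InUminus M u ∧ InGLO c1 ∧ InGLO c2 ∧
          X = g * tdiag (fun i => -(lam i)) * c1 ∧
          Y = embTop M (M + 1 + K) g * u * (Dmat M K * tdiag (fullSeq M K th thp)) * c2)
    (hS : ∃ (v1 : Matrix (Fin M) (Fin M) F)
        (v2 : Matrix (Fin (M + 1 + K)) (Fin (M + 1 + K)) F)
        (c1 : Matrix (Fin M) (Fin M) F)
        (c2 : Matrix (Fin (M + 1 + K)) (Fin (M + 1 + K)) F),
        LowUnip v1 ∧ UpUnip v2 ∧ InGLO c1 ∧ InGLO c2 ∧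
          X = v1 * tdiag (fun i => -(lam i)) * c1 ∧
          Y = Dmat M K * v2 * tdiag (fullSeq M K th thp) * c2) :
    ∃ (c : Matrix (Fin M) (Fin M) F)
      (c' : Matrix (Fin (M + 1 + K)) (Fin (M + 1 + K)) F),
      InGLO c ∧ InGLO c' ∧
        X = tdiag (fun i => -(lam i)) * c ∧
        Y = Dmat M K * tdiag (fullSeq M K th thp) * c' := by
  obtain ⟨g, u, a, p, hu, ha, hp, hXO, hYO⟩ := hO
  obtain ⟨v, V, b, q, hv, hV, hb, hq, rfl, rfl⟩ := hS
  obtain ⟨l, hl, hvl⟩ := exists_mul_tdiag_eq_of_lowUnip (fun i => -lam i) hv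
  obtain ⟨r, hr, hVr⟩ := exists_mul_tdiag_eq_of_upUnip (fullSeq M K th thp) hV
  rw [mul_assoc (Dmat M K)] at hYO ⊢
  rw [hvl] at hXO ⊢
  rw [hVr] at hYO ⊢
  obtain ⟨hl_int, hr_int⟩ :=
    mem_matrix_laurentIntegers_of_orbits_eq hmono hu hl hr ha hb hp hq hXO hYO
  exact ⟨l * b, r * q, (inGLO_of_det_eq_one hl_int hl.det_eq_one_of_transpose).mul hb,
    (inGLO_of_det_eq_one hr_int hr.det_eq_one).mul hq, mul_assoc _ _ _, by simp only [mul_assoc]⟩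

/-- If the weights coincide, the intersection of the `H(F)`-orbit
`O^{(λ,(θ,θ'))}` and the `U(F)`-orbit `S^{(λ,(θ,θ'))}` in `Gr_M × Gr_N` consists of
exactly one point, namely `(t^{-λ}, D·t^{(θ,θ')})`: any pair `(X·GL_M(O), Y·GL_N(O))`
lying in both orbits equals that point. -/
theorem stmt5 (M K : ℕ)
    (lam : Fin M → ℤ) (th : Fin (M + 1) → ℤ) (thp : Fin K → ℤ)
    (hlam : Monotone lam) (hth : Monotone th)
    (X : Matrix (Fin M) (Fin M) F)
    (Y : Matrix (Fin (M + 1 + K)) (Fin (M + 1 + K)) F)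
    (hO : ∃ (g : Matrix (Fin M) (Fin M) F)
        (u : Matrix (Fin (M + 1 + K)) (Fin (M + 1 + K)) F)
        (c1 : Matrix (Fin M) (Fin M) F)
        (c2 : Matrix (Fin (M + 1 + K)) (Fin (M + 1 + K)) F),
        IsUnit g.det ∧ InUminus M u ∧ InGLO c1 ∧ InGLO c2 ∧
          X = g * tdiag (fun i => -(lam i)) * c1 ∧
          Y = embTop M (M + 1 + K) g * u * (Dmat M K * tdiag (fullSeq M K th thp)) * c2)
    (hS : ∃ (v1 : Matrix (Fin M) (Fin M) F)
        (v2 : Matrix (Fin (M + 1 + K)) (Fin (M + 1 + K)) F)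
        (c1 : Matrix (Fin M) (Fin M) F)
        (c2 : Matrix (Fin (M + 1 + K)) (Fin (M + 1 + K)) F),
        LowUnip v1 ∧ UpUnip v2 ∧ InGLO c1 ∧ InGLO c2 ∧
          X = v1 * tdiag (fun i => -(lam i)) * c1 ∧
          Y = Dmat M K * v2 * tdiag (fullSeq M K th thp) * c2) :
    ∃ (c : Matrix (Fin M) (Fin M) F)
      (c' : Matrix (Fin (M + 1 + K)) (Fin (M + 1 + K)) F),
      InGLO c ∧ InGLO c' ∧
        X = tdiag (fun i => -(lam i)) * c ∧
        Y = Dmat M K * tdiag (fullSeq M K th thp) * c' := by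
  exact stmt5_general M K lam th thp
    (hlam.add (hth.comp Fin.strictMono_castSucc.monotone)) X Y
    (hO.imp fun _ => .imp fun _ => .imp fun _ => .imp fun _ => And.right) hS
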